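/- arXiv:1807.07095 — 3 statements merged into one kernel-verified Lean document; each statement's English description precedes it below -/
import Mathlib

section
/- Let (Θ,I,p) be a statistical model with Σ_{i=1}^n p_i(θ) = 1 on Θ, and q ∈ P_+(I). Then the Euclidean gradient of the KL divergence satisfies ∇_θ D_KL(p(θ)‖q) = J_θp(θ)ᵀ log(p(θ)/q), where log(p(θ)/q) = (log(p_i(θ)/q_i))_{i=1}^n; in particular, since J_θp(θ)ᵀ 1⃗ = 0 for the all-ones vector 1⃗, the Riemannian gradient flow of D_KL(p(·)‖q) in the metric G_W is the ODE dθ/dt = −(J_θp(θ)ᵀ L(p(θ))^† J_θp(θ))^† J_θp(θ)ᵀ log(p(θ)/q) (Fokker–Planck equation on parameter space). -/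
open Matrix Set

namespace StatRicci

noncomputable section

open scoped Classical in
/-- The Moore–Penrose pseudoinverse of a square real matrix, characterized by the
four Penrose conditions. -/
def mpinv {k : Type*} [Fintype k] [DecidableEq k] (A : Matrix k k ℝ) : Matrix k k ℝ :=
  if h : ∃ B : Matrix k k ℝ,
      A * B * A = A ∧ B * A * B = B ∧ (A * B)ᵀ = A * B ∧ (B * A)ᵀ = B * A
  then h.choose else 0

/-- `q` is a strictly positive probability vector: `q ∈ P₊(I)`. -/
def posProb {n : ℕ} (q : Fin n → ℝ) : Prop :=
  (∀ i, 0 < q i) ∧ ∑ i, q i = 1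

/-- `ω` is a symmetric nonnegative weight matrix with zero diagonal:
`ω i j = ω j i > 0` on edges and `ω i j = 0` otherwise. -/
def isWeight {n : ℕ} (ω : Fin n → Fin n → ℝ) : Prop :=
  (∀ i j, ω i j = ω j i) ∧ (∀ i j, 0 ≤ ω i j) ∧ ∀ i, ω i i = 0

/-- The graph on `I` with edge set `{(i,j) : ω i j > 0}` is connected. -/
def isConn {n : ℕ} (ω : Fin n → Fin n → ℝ) : Prop :=
  (SimpleGraph.fromRel fun i j => 0 < ω i j).Connected

/-- Normalized volume form `d_i`. -/
def dvol {n : ℕ} (ω : Fin n → Fin n → ℝ) (i : Fin n) : ℝ :=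
  (∑ j, ω i j) / ∑ k, ∑ j, ω k j

/-- Edge weight `Λ(p)_{(i,j),(i,j)} = ((p i)/d_i + (p j)/d_j)/2`. -/
def lamW {n : ℕ} (ω : Fin n → Fin n → ℝ) (p : Fin n → ℝ) (i j : Fin n) : ℝ :=
  (p i / dvol ω i + p j / dvol ω j) / 2

/-- The weighted Laplacian `L(p) = Dᵀ Λ(p) D`, written entrywise as a sum over edges
(each unordered edge `(i,j)` counted once, with `j < i`; non-edges contribute `0`
since `ω i j = 0` there). -/
def Lap {n : ℕ} (ω : Fin n → Fin n → ℝ) (p : Fin n → ℝ) : Matrix (Fin n) (Fin n) ℝ :=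
  Matrix.of fun k l => ∑ i, ∑ j,
    if j < i then
      ω i j * lamW ω p i j *
        (((if k = i then (1 : ℝ) else 0) - if k = j then 1 else 0) *
          ((if l = i then (1 : ℝ) else 0) - if l = j then 1 else 0))
    else 0

/-- Partial derivative `∂_{θ_a} f (θ)`. -/
def pd {d : ℕ} (f : (Fin d → ℝ) → ℝ) (a : Fin d) (θ : Fin d → ℝ) : ℝ :=
  fderiv ℝ f θ (Pi.single a 1)

/-- Euclidean gradient `∇_θ f (θ)`. -/
def grad {d : ℕ} (f : (Fin d → ℝ) → ℝ) (θ : Fin d → ℝ) : Fin d → ℝ :=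
  fun a => pd f a θ

/-- Euclidean Hessian `∇²_θ f (θ)`. -/
def hess {d : ℕ} (f : (Fin d → ℝ) → ℝ) (θ : Fin d → ℝ) : Matrix (Fin d) (Fin d) ℝ :=
  Matrix.of fun a b => pd (pd f b) a θ

/-- Jacobian matrix `J_θ p(θ) ∈ ℝ^{n×d}`. -/
def Jac {n d : ℕ} (p : (Fin d → ℝ) → Fin n → ℝ) (θ : Fin d → ℝ) :
    Matrix (Fin n) (Fin d) ℝ :=
  Matrix.of fun i a => pd (fun x => p x i) a θ

/-- The Kullback–Leibler divergence `D_KL(p‖q)`. -/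
def KLdiv {n : ℕ} (p q : Fin n → ℝ) : ℝ :=
  ∑ i, p i * Real.log (p i / q i)

/-- Wasserstein metric tensor `G_W(θ) = J_θp(θ)ᵀ L(p(θ))† J_θp(θ)`. -/
def GW {n d : ℕ} (ω : Fin n → Fin n → ℝ) (p : (Fin d → ℝ) → Fin n → ℝ)
    (θ : Fin d → ℝ) : Matrix (Fin d) (Fin d) ℝ :=
  (Jac p θ)ᵀ * mpinv (Lap ω (p θ)) * Jac p θ

/-- Fisher–Rao metric tensor `G_F(θ)`. -/
def GF {n d : ℕ} (p : (Fin d → ℝ) → Fin n → ℝ) (θ : Fin d → ℝ) :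
    Matrix (Fin d) (Fin d) ℝ :=
  Matrix.of fun a b => ∑ i, (1 / p θ i) * pd (fun x => p x i) a θ * pd (fun x => p x i) b θ

/-- Christoffel symbol matrices `Γ^{W,k}(θ)` of `G_W`. -/
def Christoffel {n d : ℕ} (ω : Fin n → Fin n → ℝ) (p : (Fin d → ℝ) → Fin n → ℝ)
    (k : Fin d) (θ : Fin d → ℝ) : Matrix (Fin d) (Fin d) ℝ :=
  Matrix.of fun i j => (1 / 2) * ∑ l,
    (GW ω p θ)⁻¹ k l *
      (pd (fun x => GW ω p x j l) i θ + pd (fun x => GW ω p x i l) j θ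
        - pd (fun x => GW ω p x i j) l θ)

/-- Loewner-type ordering via quadratic forms: `matGE A B` means `A ⪰ B`. -/
def matGE {d : ℕ} (A B : Matrix (Fin d) (Fin d) ℝ) : Prop :=
  ∀ x : Fin d → ℝ, x ⬝ᵥ B.mulVec x ≤ x ⬝ᵥ A.mulVec x

/-- `γ` is a constant-speed geodesic of `(Θ, g_W)` with values in `S` on `[0,1]`. -/
def IsGeodesicOn {n d : ℕ} (ω : Fin n → Fin n → ℝ) (p : (Fin d → ℝ) → Fin n → ℝ)
    (S : Set (Fin d → ℝ)) (γ : ℝ → Fin d → ℝ) : Prop :=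
  ContDiff ℝ 2 γ ∧ (∀ t ∈ Icc (0 : ℝ) 1, γ t ∈ S) ∧
    ∀ t ∈ Icc (0 : ℝ) 1, ∀ k,
      deriv (fun s => deriv γ s k) t
        + ∑ i, ∑ j, Christoffel ω p k (γ t) i j * deriv γ t i * deriv γ t j = 0

/-- Squared Wasserstein distance `d_W(θ₀,θ₁)²` on parameter space. -/
def dW2 {n d : ℕ} (ω : Fin n → Fin n → ℝ) (p : (Fin d → ℝ) → Fin n → ℝ)
    (S : Set (Fin d → ℝ)) (θ0 θ1 : Fin d → ℝ) : ℝ :=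
  sInf {E : ℝ | ∃ γ : ℝ → Fin d → ℝ, ContDiff ℝ 1 γ ∧ (∀ t ∈ Icc (0 : ℝ) 1, γ t ∈ S) ∧
    γ 0 = θ0 ∧ γ 1 = θ1 ∧
    E = ∫ t in (0 : ℝ)..1, deriv γ t ⬝ᵥ (GW ω p (γ t)).mulVec (deriv γ t)}

/-- `Ric(Θ,I,p) ≥ κ`: geodesic `κ`-convexity of the KL divergence. -/
def RicGE {n d : ℕ} (ω : Fin n → Fin n → ℝ) (p : (Fin d → ℝ) → Fin n → ℝ)
    (S : Set (Fin d → ℝ)) (q : Fin n → ℝ) (κ : ℝ) : Prop :=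
  ∀ γ : ℝ → Fin d → ℝ, IsGeodesicOn ω p S γ →
    ∀ t ∈ Icc (0 : ℝ) 1,
      KLdiv (p (γ t)) q ≤ (1 - t) * KLdiv (p (γ 0)) q + t * KLdiv (p (γ 1)) q
        - κ / 2 * t * (1 - t) * dW2 ω p S (γ 0) (γ 1)

/-- Relative Fisher information `I(p(θ)‖q)`. -/
def relFisher {n d : ℕ} (ω : Fin n → Fin n → ℝ) (p : (Fin d → ℝ) → Fin n → ℝ)
    (q : Fin n → ℝ) (θ : Fin d → ℝ) : ℝ :=
  grad (fun x => KLdiv (p x) q) θ ⬝ᵥ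
    ((GW ω p θ)⁻¹).mulVec (grad (fun x => KLdiv (p x) q) θ)

/-- The RIW matrix
`G_F(θ) + Σ_a ∇²_θ p_a(θ)·log(p_a(θ)/q_a) − Σ_k ∂_{θ_k}D_KL(p(θ)‖q)·Γ^{W,k}(θ)`. -/
def RIWmat {n d : ℕ} (ω : Fin n → Fin n → ℝ) (p : (Fin d → ℝ) → Fin n → ℝ)
    (q : Fin n → ℝ) (θ : Fin d → ℝ) : Matrix (Fin d) (Fin d) ℝ :=
  GF p θ + (∑ i, Real.log (p θ i / q i) • hess (fun x => p x i) θ)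
    - ∑ k, pd (fun x => KLdiv (p x) q) k θ • Christoffel ω p k θ

/-- The covariant (Wasserstein) Hessian `H_W(θ)` of the KL divergence. -/
def HW {n d : ℕ} (ω : Fin n → Fin n → ℝ) (p : (Fin d → ℝ) → Fin n → ℝ)
    (q : Fin n → ℝ) (θ : Fin d → ℝ) : Matrix (Fin d) (Fin d) ℝ :=
  hess (fun x => KLdiv (p x) q) θ
    - ∑ k, pd (fun x => KLdiv (p x) q) k θ • Christoffel ω p k θ

/-!
With `q` fixed, `D_KL(·‖q)` has Euclidean gradient `log (p/q) + 1⃗` on `ℝⁿ`, so by the chain rule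
the gradient of `θ ↦ D_KL(p(θ)‖q)` is `Jᵀ (log (p/q) + 1⃗)`. The chain rule applied to the total
mass `∑ᵢ pᵢ`, whose gradient on `ℝⁿ` is `1⃗`, shows that `Jᵀ 1⃗` is the gradient of a constant, so
the extra `1⃗` disappears.
-/

open scoped Topology

section Gradient

variable {n d : ℕ} {p : (Fin d → ℝ) → Fin n → ℝ} {q : Fin n → ℝ} {θ : Fin d → ℝ} {c : ℝ}

theorem grad_const : grad (fun _ => c) θ = 0 := by
  ext a
  simp [grad, pd]

theorem grad_congr {f g : (Fin d → ℝ) → ℝ} (h : f =ᶠ[𝓝 θ] g) : grad f θ = grad g θ := by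
  ext a
  simp only [grad, pd, h.fderiv_eq]

theorem col_Jac (hp : DifferentiableAt ℝ p θ) (a : Fin d) :
    (Jac p θ).col a = fderiv ℝ p θ (Pi.single a 1) := by
  ext i
  simp [Jac, pd, fderiv_apply hp]

theorem grad_dotProduct (f : (Fin d → ℝ) → ℝ) (θ v : Fin d → ℝ) :
    grad f θ ⬝ᵥ v = fderiv ℝ f θ v := by
  simp only [dotProduct, grad, pd]
  conv_rhs => rw [pi_eq_sum_univ' v, map_sum]
  simp [mul_comm]

theorem grad_comp {F : (Fin n → ℝ) → ℝ} (hF : DifferentiableAt ℝ F (p θ))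
    (hp : DifferentiableAt ℝ p θ) :
    grad (fun x => F (p x)) θ = (Jac p θ)ᵀ *ᵥ grad F (p θ) := by
  ext a
  calc grad (fun x => F (p x)) θ a
      = fderiv ℝ F (p θ) (fderiv ℝ p θ (Pi.single a 1)) := by
        simp only [grad, pd, fderiv_fun_comp θ hF hp, ContinuousLinearMap.comp_apply]
    _ = grad F (p θ) ⬝ᵥ (Jac p θ).col a := by
        rw [grad_dotProduct, col_Jac hp]
    _ = ((Jac p θ)ᵀ *ᵥ grad F (p θ)) a := dotProduct_comm _ _

section Separable

variable {f : Fin n → ℝ → ℝ} {f' x : Fin n → ℝ}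

theorem hasFDerivAt_sum_apply (hf : ∀ i, HasDerivAt (f i) (f' i) (x i)) :
    HasFDerivAt (fun y : Fin n → ℝ => ∑ i, f i (y i))
      (∑ i, f' i • ContinuousLinearMap.proj (R := ℝ) (φ := fun _ : Fin n => ℝ) i) x :=
  .fun_sum fun i _ => (hf i).comp_hasFDerivAt x (hasFDerivAt_apply i x)

theorem grad_sum_apply (hf : ∀ i, HasDerivAt (f i) (f' i) (x i)) :
    grad (fun y => ∑ i, f i (y i)) x = f' := by
  ext a
  simp [grad, pd, (hasFDerivAt_sum_apply hf).fderiv, Pi.single_apply]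

theorem grad_sum_comp (hf : ∀ i, HasDerivAt (f i) (f' i) (p θ i)) (hp : DifferentiableAt ℝ p θ) :
    grad (fun x => ∑ i, f i (p x i)) θ = (Jac p θ)ᵀ *ᵥ f' := by
  rw [grad_comp (hasFDerivAt_sum_apply hf).differentiableAt hp, grad_sum_apply hf]

end Separable

theorem Jac_transpose_mulVec_one (hp : DifferentiableAt ℝ p θ)
    (hsum : (fun x => ∑ i, p x i) =ᶠ[𝓝 θ] fun _ => c) :
    (Jac p θ)ᵀ *ᵥ (fun _ => 1) = 0 := by
  rw [← grad_sum_comp (fun i => hasDerivAt_id' (p θ i)) hp, grad_congr hsum, grad_const]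

theorem hasDerivAt_mul_log_div {x : ℝ} (hx : x ≠ 0) (hc : c ≠ 0) :
    HasDerivAt (fun y => y * Real.log (y / c)) (Real.log (x / c) + 1) x := by
  have h := (hasDerivAt_id' x).fun_mul
    (((hasDerivAt_id' x).div_const c).log (div_ne_zero hx hc))
  refine h.congr_deriv ?_
  rw [one_mul]
  field_simp

theorem grad_KLdiv_comp (hp : DifferentiableAt ℝ p θ) (hpθ : ∀ i, p θ i ≠ 0)
    (hq : ∀ i, q i ≠ 0) (hsum : (fun x => ∑ i, p x i) =ᶠ[𝓝 θ] fun _ => c) :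
    grad (fun x => KLdiv (p x) q) θ = (Jac p θ)ᵀ *ᵥ fun i => Real.log (p θ i / q i) := by
  calc grad (fun x => KLdiv (p x) q) θ
      = (Jac p θ)ᵀ *ᵥ (fun i => Real.log (p θ i / q i) + 1) :=
        grad_sum_comp (fun i => hasDerivAt_mul_log_div (hpθ i) (hq i)) hp
    _ = (Jac p θ)ᵀ *ᵥ fun i => Real.log (p θ i / q i) := by
        rw [← Pi.add_def, mulVec_add, Jac_transpose_mulVec_one hp hsum, add_zero]

/-- The Riemannian gradient `G(θ)† ∇_θ F(θ)` of `F` in the metric tensor `G`. The pseudoinverse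
replaces the inverse, so that a degenerate `G` is allowed. -/
def riemannianGrad (G : (Fin d → ℝ) → Matrix (Fin d) (Fin d) ℝ) (F : (Fin d → ℝ) → ℝ)
    (θ : Fin d → ℝ) : Fin d → ℝ :=
  mpinv (G θ) *ᵥ grad F θ

theorem gradient_formula_and_fokker_planck_general
    (G : (Fin d → ℝ) → Matrix (Fin d) (Fin d) ℝ) (hp : DifferentiableAt ℝ p θ)
    (hpos : ∀ i, 0 < p θ i) (hsum : (fun x => ∑ i, p x i) =ᶠ[𝓝 θ] fun _ => c)
    (hq : ∀ i, 0 < q i) :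
    grad (fun x => KLdiv (p x) q) θ = (Jac p θ)ᵀ *ᵥ (fun i => Real.log (p θ i / q i)) ∧
      (Jac p θ)ᵀ *ᵥ (fun _ => 1) = 0 ∧
      riemannianGrad G (fun x => KLdiv (p x) q) θ =
        mpinv (G θ) *ᵥ ((Jac p θ)ᵀ *ᵥ fun i => Real.log (p θ i / q i)) := by
  have hgrad := grad_KLdiv_comp hp (fun i => (hpos i).ne') (fun i => (hq i).ne') hsum
  exact ⟨hgrad, Jac_transpose_mulVec_one hp hsum, congrArg (mpinv (G θ) *ᵥ ·) hgrad⟩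

end Gradient

/-- The Euclidean gradient of the KL divergence is
`∇_θ D_KL(p(θ)‖q) = J_θp(θ)ᵀ log(p(θ)/q)`; moreover `J_θp(θ)ᵀ 1⃗ = 0`, so that the
Riemannian gradient flow of `D_KL(p(·)‖q)` in the metric `G_W`, i.e. the Fokker–Planck
equation on parameter space, has vector field
`−(J_θp(θ)ᵀ L(p(θ))† J_θp(θ))† J_θp(θ)ᵀ log(p(θ)/q)`. -/
theorem gradient_formula_and_fokker_planck {n d : ℕ} (ω : Fin n → Fin n → ℝ)
    (hω : isWeight ω) (hconn : isConn ω)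
    (p : (Fin d → ℝ) → Fin n → ℝ) (hp : ContDiff ℝ 1 p)
    (hpos : ∀ θ, posProb (p θ))
    (hrank : ∀ θ, (Jac p θ).rank = d)
    (q : Fin n → ℝ) (hq : posProb q) :
    ∀ θ : Fin d → ℝ,
      grad (fun x => KLdiv (p x) q) θ
          = (Jac p θ)ᵀ.mulVec (fun i => Real.log (p θ i / q i)) ∧
      (Jac p θ)ᵀ.mulVec (fun _ => (1 : ℝ)) = 0 ∧
      (mpinv (GW ω p θ)).mulVec (grad (fun x => KLdiv (p x) q) θ)
          = (mpinv ((Jac p θ)ᵀ * mpinv (Lap ω (p θ)) * Jac p θ)).mulVec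
              ((Jac p θ)ᵀ.mulVec (fun i => Real.log (p θ i / q i))) := by
  exact fun θ => gradient_formula_and_fokker_planck_general (GW ω p)
    (hp.differentiable one_ne_zero θ) (hpos θ).1 (.of_forall fun x => (hpos x).2) hq.1

end
end StatRicci
end

section
/- (HWI inequality on parameter space.) Let (Θ,I,p) be a statistical model, q ∈ P_+(I), κ ∈ ℝ (not necessarily positive), and suppose the covariant Hessian bound H_W(θ) = ∇²_θ D_KL(p(θ)‖q) − Σ_k (∂_{θ_k}D_KL(p(θ)‖q))·Γ^{W,k}(θ) ⪰ κ G_W(θ) holds for all θ ∈ Θ. Let θ* be a minimizer of D_KL(p(·)‖q) on Θ and assume there is a constant-speed geodesic θ_t, t∈[0,1], of least energy joining θ_0 = θ and θ_1 = θ*, with energy g_W(θ̇_t,θ̇_t) = d_W(θ,θ*)². Then D_KL(p(θ)‖q) − D_KL(p(θ*)‖q) ≤ √(I(p(θ)‖q)) · d_W(θ,θ*) − (κ/2) · d_W(θ,θ*)², where I(p(θ)‖q) = ∇_θ D_KL(p(θ)‖q)ᵀ G_W(θ)^{-1} ∇_θ D_KL(p(θ)‖q). -/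
open Matrix Set

namespace StatRicci

noncomputable section

/-!
For a covariantly `κ`-convex function `F`, the restriction to a geodesic `γ` of squared speed `E`
has second derivative at least `κ E`, because the Christoffel terms of the covariant Hessian are
exactly what the acceleration of `γ` contributes to `(F ∘ γ)''`. Hence
`F (γ 1) ≥ F (γ 0) + ∇F(γ 0) · γ'(0) + κ E / 2`, and the linear term is bounded below by pairing the
gradient with the velocity through Cauchy–Schwarz for the metric and its dual.
-/

lemma add_mul_sub_add_half_mul_sq_le_of_le_deriv2 {f f' f'' : ℝ → ℝ} {a b c : ℝ} (hab : a < b)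
    (hf : ∀ t ∈ Icc a b, HasDerivWithinAt f (f' t) (Icc a b) t)
    (hf' : ∀ t ∈ Icc a b, HasDerivWithinAt f' (f'' t) (Icc a b) t)
    (hc : ∀ t ∈ Icc a b, c ≤ f'' t) :
    f a + f' a * (b - a) + c / 2 * (b - a) ^ 2 ≤ f b := by
  let g : ℝ → ℝ := fun t => f t - c / 2 * (t - a) ^ 2
  have hg : ∀ t ∈ Icc a b, HasDerivWithinAt g (f' t - c * (t - a)) (Icc a b) t := fun t ht => by
    convert! (hf t ht).sub
      ((((hasDerivWithinAt_id t _).sub_const a).pow 2).const_mul (c / 2)) using 1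
    simp only [id]
    ring
  have hg' : ∀ t ∈ Icc a b,
      HasDerivWithinAt (fun s => f' s - c * (s - a)) (f'' t - c) (Icc a b) t := fun t ht => by
    convert! (hf' t ht).sub (((hasDerivWithinAt_id t _).sub_const a).const_mul c) using 1
    rw [mul_one]
  have hconvex : ConvexOn ℝ (Icc a b) g :=
    convexOn_of_hasDerivWithinAt2_nonneg (convex_Icc a b)
      (fun t ht => (hg t ht).continuousWithinAt)
      (fun t ht => (hg t (interior_subset ht)).mono interior_subset)
      (fun t ht => (hg' t (interior_subset ht)).mono interior_subset)
      (fun t ht => sub_nonneg.2 (hc t (interior_subset ht)))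
  have ha : a ∈ Icc a b := left_mem_Icc.2 hab.le
  have hslope := hconvex.le_slope_of_hasDerivWithinAt ha (right_mem_Icc.2 hab.le) hab (hg a ha)
  rw [slope_def_field, le_div_iff₀ (sub_pos.2 hab)] at hslope
  simp only [g, sub_self] at hslope
  linarith

section DualCauchySchwarz

variable {ι : Type*} [Fintype ι] {G : Matrix ι ι ℝ}

lemma sq_dotProduct_mulVec_le_of_posSemidef (hG : G.PosSemidef) (u v : ι → ℝ) :
    (u ⬝ᵥ G *ᵥ v) ^ 2 ≤ (u ⬝ᵥ G *ᵥ u) * (v ⬝ᵥ G *ᵥ v) := by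
  classical
  have hGt : Gᵀ = G := by simpa using hG.isHermitian.eq
  have hsymm : LinearMap.IsSymm (Matrix.toBilin' G) := ⟨fun x y => by
    simp only [RingHom.id_apply, Matrix.toBilin'_apply']
    rw [Matrix.dotProduct_mulVec, ← Matrix.mulVec_transpose, hGt, dotProduct_comm]⟩
  have hnonneg : ∀ x, 0 ≤ Matrix.toBilin' G x x := fun x => by
    simpa [Matrix.toBilin'_apply'] using hG.dotProduct_mulVec_nonneg x
  simpa only [Matrix.toBilin'_apply'] using
    (Matrix.toBilin' G).apply_sq_le_of_symm hnonneg hsymm u v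

lemma abs_dotProduct_le_sqrt_inv_mul_sqrt_of_posDef [DecidableEq ι] (hG : G.PosDef)
    (u v : ι → ℝ) :
    |u ⬝ᵥ v| ≤ √(u ⬝ᵥ G⁻¹ *ᵥ u) * √(v ⬝ᵥ G *ᵥ v) := by
  have hnonneg : 0 ≤ u ⬝ᵥ G⁻¹ *ᵥ u := by
    simpa using hG.inv.posSemidef.dotProduct_mulVec_nonneg u
  have hGw : G *ᵥ (G⁻¹ *ᵥ u) = u := by
    rw [Matrix.mulVec_mulVec, Matrix.mul_nonsing_inv _ hG.det_pos.ne'.isUnit, Matrix.one_mulVec]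
  have hsq := sq_dotProduct_mulVec_le_of_posSemidef hG.posSemidef v (G⁻¹ *ᵥ u)
  rw [hGw, dotProduct_comm v u, dotProduct_comm (G⁻¹ *ᵥ u) u, mul_comm] at hsq
  rw [← Real.sqrt_mul hnonneg]
  exact Real.abs_le_sqrt hsq

end DualCauchySchwarz

section SecondOrderChainRule

lemma hasDerivAt_fderiv_comp_apply {V W : Type*} [NormedAddCommGroup V] [NormedSpace ℝ V]
    [NormedAddCommGroup W] [NormedSpace ℝ W] {F : V → W} {γ γ' : ℝ → V} {a : V} {t : ℝ}
    (hF : DifferentiableAt ℝ (fderiv ℝ F) (γ t)) (hγ : HasDerivAt γ (γ' t) t)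
    (hγ' : HasDerivAt γ' a t) :
    HasDerivAt (fun s => fderiv ℝ F (γ s) (γ' s))
      (fderiv ℝ (fderiv ℝ F) (γ t) (γ' t) (γ' t) + fderiv ℝ F (γ t) a) t :=
  (hF.hasFDerivAt.comp_hasDerivAt t hγ).clm_apply hγ'

variable {d : ℕ} {F : (Fin d → ℝ) → ℝ}

lemma fderiv_apply_eq_grad_dotProduct (F : (Fin d → ℝ) → ℝ) (θ v : Fin d → ℝ) :
    fderiv ℝ F θ v = grad F θ ⬝ᵥ v :=
  (LinearMap.congr_fun ((dotProductEquiv ℝ (Fin d)).apply_symm_apply (fderiv ℝ F θ)) v).symm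

lemma fderiv_fderiv_apply_eq_dotProduct_hess {θ : Fin d → ℝ}
    (hF : DifferentiableAt ℝ (fderiv ℝ F) θ) (v w : Fin d → ℝ) :
    fderiv ℝ (fderiv ℝ F) θ v w = v ⬝ᵥ hess F θ *ᵥ w := by
  have hpd (b : Fin d) : fderiv ℝ (fderiv ℝ F) θ v (Pi.single b 1) = grad (pd F b) θ ⬝ᵥ v := by
    have hb : HasFDerivAt (pd F b) ((fderiv ℝ (fderiv ℝ F) θ).flip (Pi.single b 1)) θ := by
      simpa using! hF.hasFDerivAt.clm_apply (hasFDerivAt_const (Pi.single b 1) θ)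
    rw [← fderiv_apply_eq_grad_dotProduct, hb.fderiv, ContinuousLinearMap.flip_apply]
  calc fderiv ℝ (fderiv ℝ F) θ v w
      = (fun b => fderiv ℝ (fderiv ℝ F) θ v (Pi.single b 1)) ⬝ᵥ w :=
        (LinearMap.congr_fun ((dotProductEquiv ℝ (Fin d)).apply_symm_apply
          (fderiv ℝ (fderiv ℝ F) θ v)) w).symm
    _ = (v ᵥ* hess F θ) ⬝ᵥ w := by
        simp only [hpd, dotProduct_comm _ v]
        rfl
    _ = v ⬝ᵥ hess F θ *ᵥ w := (Matrix.dotProduct_mulVec v _ w).symm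

end SecondOrderChainRule

lemma contDiffAt_KLdiv {V : Type*} [NormedAddCommGroup V] [NormedSpace ℝ V] {n : ℕ}
    {m : WithTop ℕ∞} {p : V → Fin n → ℝ} {q : Fin n → ℝ} {x : V} (hp : ContDiffAt ℝ m p x)
    (hpx : ∀ i, p x i ≠ 0) (hq : ∀ i, q i ≠ 0) :
    ContDiffAt ℝ m (fun y => KLdiv (p y) q) x :=
  ContDiffAt.sum fun i _ =>
    (contDiffAt_pi.1 hp i).mul
      (((contDiffAt_pi.1 hp i).div_const (q i)).log (div_ne_zero (hpx i) (hq i)))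

section Autoparallel

variable {d : ℕ} {F : (Fin d → ℝ) → ℝ} {Γ : Fin d → (Fin d → ℝ) → Matrix (Fin d) (Fin d) ℝ}
  {G : (Fin d → ℝ) → Matrix (Fin d) (Fin d) ℝ} {S : Set (Fin d → ℝ)} {γ : ℝ → Fin d → ℝ}
  {κ E t : ℝ}

/-- The covariant Hessian of `F` for the affine connection with symbols `Γ k θ i j = Γᵏᵢⱼ(θ)`.
The matrix `HW ω p q` is the case of the KL divergence and the Christoffel symbols of `GW ω p`. -/
def covHess (F : (Fin d → ℝ) → ℝ) (Γ : Fin d → (Fin d → ℝ) → Matrix (Fin d) (Fin d) ℝ)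
    (θ : Fin d → ℝ) : Matrix (Fin d) (Fin d) ℝ :=
  hess F θ - ∑ k, pd F k θ • Γ k θ

/-- `γ` is a geodesic in `S`, over the time interval `[0, 1]`, of the affine connection with
symbols `Γ k θ i j = Γᵏᵢⱼ(θ)`, which need not come from a metric. `IsGeodesicOn ω p` is the case
`Γ = Christoffel ω p`. -/
def IsAutoparallelOn (Γ : Fin d → (Fin d → ℝ) → Matrix (Fin d) (Fin d) ℝ)
    (S : Set (Fin d → ℝ)) (γ : ℝ → Fin d → ℝ) : Prop :=
  ContDiff ℝ 2 γ ∧ (∀ t ∈ Icc (0 : ℝ) 1, γ t ∈ S) ∧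
    ∀ t ∈ Icc (0 : ℝ) 1, ∀ k,
      deriv (fun s => deriv γ s k) t
        + ∑ i, ∑ j, Γ k (γ t) i j * deriv γ t i * deriv γ t j = 0

lemma dotProduct_covHess_mulVec (F : (Fin d → ℝ) → ℝ)
    (Γ : Fin d → (Fin d → ℝ) → Matrix (Fin d) (Fin d) ℝ) (θ v w : Fin d → ℝ) :
    v ⬝ᵥ covHess F Γ θ *ᵥ w =
      v ⬝ᵥ hess F θ *ᵥ w - grad F θ ⬝ᵥ fun k => v ⬝ᵥ Γ k θ *ᵥ w := by
  simp only [covHess, Matrix.sub_mulVec, Matrix.sum_mulVec, Matrix.smul_mulVec, dotProduct_sub,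
    dotProduct_sum, dotProduct_smul, smul_eq_mul]
  rfl

namespace IsAutoparallelOn

lemma hasDerivAt_deriv (hγ : IsAutoparallelOn Γ S γ) (ht : t ∈ Icc (0 : ℝ) 1) :
    HasDerivAt (deriv γ) (-fun k => deriv γ t ⬝ᵥ Γ k (γ t) *ᵥ deriv γ t) t := by
  have hγ' : Differentiable ℝ (deriv γ) := (hγ.1.deriv' (n := 1)).differentiable one_ne_zero
  refine hasDerivAt_pi.2 fun k => ?_
  have hk := (differentiableAt_pi.1 (hγ' t) k).hasDerivAt
  rw [eq_neg_of_add_eq_zero_left (hγ.2.2 t ht k)] at hk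
  convert! hk using 1
  simp only [Pi.neg_apply, dotProduct, Matrix.mulVec, Finset.mul_sum]
  congr! 3
  ring

lemma hasDerivAt_fderiv_comp (hγ : IsAutoparallelOn Γ S γ) (ht : t ∈ Icc (0 : ℝ) 1)
    (hF : DifferentiableAt ℝ (fderiv ℝ F) (γ t)) :
    HasDerivAt (fun s => fderiv ℝ F (γ s) (deriv γ s))
      (deriv γ t ⬝ᵥ covHess F Γ (γ t) *ᵥ deriv γ t) t := by
  rw [dotProduct_covHess_mulVec, sub_eq_add_neg, ← dotProduct_neg,
    ← fderiv_fderiv_apply_eq_dotProduct_hess hF, ← fderiv_apply_eq_grad_dotProduct]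
  exact hasDerivAt_fderiv_comp_apply hF (hγ.1.differentiable two_ne_zero t).hasDerivAt
    (hγ.hasDerivAt_deriv ht)

lemma add_grad_dotProduct_add_half_mul_le (hγ : IsAutoparallelOn Γ S γ)
    (hF : ∀ θ ∈ S, ContDiffAt ℝ 2 F θ) (hconvex : ∀ θ ∈ S, matGE (covHess F Γ θ) (κ • G θ))
    (hspeed : ∀ t ∈ Icc (0 : ℝ) 1, deriv γ t ⬝ᵥ G (γ t) *ᵥ deriv γ t = E) :
    F (γ 0) + grad F (γ 0) ⬝ᵥ deriv γ 0 + κ / 2 * E ≤ F (γ 1) := by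
  have hF' : ∀ t ∈ Icc (0 : ℝ) 1, ContDiffAt ℝ 2 F (γ t) := fun t ht => hF _ (hγ.2.1 t ht)
  have hsecond : ∀ t ∈ Icc (0 : ℝ) 1, κ * E ≤ deriv γ t ⬝ᵥ covHess F Γ (γ t) *ᵥ deriv γ t := by
    intro t ht
    simpa only [Matrix.smul_mulVec, dotProduct_smul, smul_eq_mul, hspeed t ht] using
      hconvex (γ t) (hγ.2.1 t ht) (deriv γ t)
  have hTaylor := add_mul_sub_add_half_mul_sq_le_of_le_deriv2 one_pos
    (fun t ht => (((hF' t ht).differentiableAt two_ne_zero).hasFDerivAt.comp_hasDerivAt t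
      (hγ.1.differentiable two_ne_zero t).hasDerivAt).hasDerivWithinAt)
    (fun t ht => (hγ.hasDerivAt_fderiv_comp ht
      (((hF' t ht).fderiv_right (m := 1) le_rfl).differentiableAt one_ne_zero)).hasDerivWithinAt)
    hsecond
  rw [fderiv_apply_eq_grad_dotProduct] at hTaylor
  simp only [Function.comp_apply] at hTaylor
  linarith

end IsAutoparallelOn

end Autoparallel

theorem hwi_inequality_general {d : ℕ} {F : (Fin d → ℝ) → ℝ}
    {Γ : Fin d → (Fin d → ℝ) → Matrix (Fin d) (Fin d) ℝ}
    {G : (Fin d → ℝ) → Matrix (Fin d) (Fin d) ℝ} {S : Set (Fin d → ℝ)} {κ E : ℝ}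
    {γ : ℝ → Fin d → ℝ} (hF : ∀ θ ∈ S, ContDiffAt ℝ 2 F θ)
    (hconvex : ∀ θ ∈ S, matGE (covHess F Γ θ) (κ • G θ)) (hγ : IsAutoparallelOn Γ S γ)
    (hspeed : ∀ t ∈ Icc (0 : ℝ) 1, deriv γ t ⬝ᵥ G (γ t) *ᵥ deriv γ t = E)
    (hG : (G (γ 0)).PosDef) :
    F (γ 0) - F (γ 1) ≤
      √(grad F (γ 0) ⬝ᵥ (G (γ 0))⁻¹ *ᵥ grad F (γ 0)) * √E - κ / 2 * E := by
  have hTaylor := hγ.add_grad_dotProduct_add_half_mul_le hF hconvex hspeed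
  have hCauchySchwarz := abs_dotProduct_le_sqrt_inv_mul_sqrt_of_posDef hG
    (grad F (γ 0)) (deriv γ 0)
  rw [hspeed 0 (left_mem_Icc.2 zero_le_one)] at hCauchySchwarz
  linarith [neg_abs_le (grad F (γ 0) ⬝ᵥ deriv γ 0)]

/-- **HWI inequality on parameter space.** If the covariant Hessian bound
`H_W(θ) ⪰ κ G_W(θ)` holds on `Θ` (κ ∈ ℝ not necessarily positive), `θ*` is a minimizer of
the KL divergence, and `θ` is joined to `θ*` by a constant-speed geodesic of least energy
`g_W(θ̇,θ̇) = d_W(θ,θ*)²`, then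
`D_KL(p(θ)‖q) − D_KL(p(θ*)‖q) ≤ √I(p(θ)‖q)·d_W(θ,θ*) − (κ/2) d_W(θ,θ*)²`. -/
theorem hwi_inequality {n d : ℕ} (ω : Fin n → Fin n → ℝ)
    (hω : isWeight ω) (hconn : isConn ω)
    (S : Set (Fin d → ℝ))
    (p : (Fin d → ℝ) → Fin n → ℝ) (hp : ContDiff ℝ 2 p)
    (hpos : ∀ θ ∈ S, posProb (p θ))
    (hrank : ∀ θ ∈ S, (Jac p θ).rank = d)
    (hpd : ∀ θ ∈ S, (GW ω p θ).PosDef)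
    (hGW : ∀ i j, ContDiff ℝ 1 (fun θ => GW ω p θ i j))
    (q : Fin n → ℝ) (hq : posProb q)
    (κ : ℝ) (hhess : ∀ θ ∈ S, matGE (HW ω p q θ) (κ • GW ω p θ))
    (θs : Fin d → ℝ) (hθs : θs ∈ S)
    (hmin : ∀ θ ∈ S, KLdiv (p θs) q ≤ KLdiv (p θ) q) :
    ∀ θ ∈ S,
      (∃ γ : ℝ → Fin d → ℝ, IsGeodesicOn ω p S γ ∧ γ 0 = θ ∧ γ 1 = θs ∧
        ∀ t ∈ Icc (0 : ℝ) 1,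
          deriv γ t ⬝ᵥ (GW ω p (γ t)).mulVec (deriv γ t) = dW2 ω p S θ θs) →
      KLdiv (p θ) q - KLdiv (p θs) q
        ≤ Real.sqrt (relFisher ω p q θ) * Real.sqrt (dW2 ω p S θ θs)
          - κ / 2 * dW2 ω p S θ θs := by
  rintro θ hθ ⟨γ, hγ, rfl, rfl, hspeed⟩
  exact hwi_inequality_general (F := fun x => KLdiv (p x) q)
    (fun x hx => contDiffAt_KLdiv hp.contDiffAt (fun i => ((hpos x hx).1 i).ne')
      fun i => (hq.1 i).ne')
    hhess hγ hspeed (hpd _ hθ)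

end
end StatRicci
end

section
/- Let G=(I,E,ω) be a connected undirected weighted graph, let Θ ⊆ ℝ^d be open with d ≤ n−1, and let p: Θ → P_+(I) be continuously differentiable with Jacobian J_θp(θ) ∈ ℝ^{n×d} of full rank d at θ. Then the Wasserstein metric tensor G_W(θ) = J_θp(θ)ᵀ L(p(θ))^† J_θp(θ) is a symmetric positive definite d×d matrix. -/
open Matrix Set

namespace StatRicci

noncomputable section

/-!
The pseudoinverse of a positive semidefinite matrix is again positive semidefinite, with the same
kernel, so `Jᵀ L† J` is positive definite as soon as `L * J` is injective. The kernel of the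
Laplacian of a connected graph consists of the constant vectors, because its quadratic form is a sum
of squared differences along edges with positive weights. The image of the Jacobian consists of
vectors with zero sum, because probabilities add up to one, and the only constant vector with zero
sum is zero; a Jacobian of full rank therefore stays injective when multiplied by the Laplacian.
-/

/-- `b` is the Moore–Penrose inverse of `a`: the four Penrose conditions, stated with `star` so that
the algebraic theory needs only a semigroup with involution. -/
structure IsMoorePenroseInverse {R : Type*} [Mul R] [Star R] (a b : R) : Prop where
  mul_mul_self : a * b * a = a
  inv_mul_mul_inv : b * a * b = b
  isSelfAdjoint_mul : IsSelfAdjoint (a * b)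
  isSelfAdjoint_inv_mul : IsSelfAdjoint (b * a)

namespace IsMoorePenroseInverse

section Semigroup

variable {R : Type*} [Semigroup R] [StarMul R] {a b c : R}

protected theorem star (h : IsMoorePenroseInverse a b) :
    IsMoorePenroseInverse (star a) (star b) where
  mul_mul_self := by simpa only [star_mul, mul_assoc] using congrArg star h.mul_mul_self
  inv_mul_mul_inv := by simpa only [star_mul, mul_assoc] using congrArg star h.inv_mul_mul_inv
  isSelfAdjoint_mul := by
    simpa only [star_mul] using IsSelfAdjoint.star_iff.2 h.isSelfAdjoint_inv_mul
  isSelfAdjoint_inv_mul := by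
    simpa only [star_mul] using IsSelfAdjoint.star_iff.2 h.isSelfAdjoint_mul

theorem mul_eq_mul (hb : IsMoorePenroseInverse a b) (hc : IsMoorePenroseInverse a c) :
    a * b = a * c :=
  calc
    a * b = star ((a * c) * (a * b)) := by
      rw [← mul_assoc, hc.mul_mul_self, hb.isSelfAdjoint_mul.star_eq]
    _ = (a * b) * (a * c) := by
      rw [star_mul, hb.isSelfAdjoint_mul.star_eq, hc.isSelfAdjoint_mul.star_eq]
    _ = a * c := by rw [← mul_assoc, hb.mul_mul_self]

theorem inv_mul_eq_inv_mul (hb : IsMoorePenroseInverse a b) (hc : IsMoorePenroseInverse a c) :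
    b * a = c * a := by
  simpa only [star_mul, star_star] using congrArg star (hb.star.mul_eq_mul hc.star)

theorem unique (hb : IsMoorePenroseInverse a b) (hc : IsMoorePenroseInverse a c) : b = c :=
  calc
    b = b * (a * b) := by rw [← mul_assoc, hb.inv_mul_mul_inv]
    _ = c * a * c := by rw [hb.mul_eq_mul hc, ← mul_assoc, hb.inv_mul_eq_inv_mul hc]
    _ = c := hc.inv_mul_mul_inv

protected theorem isSelfAdjoint (h : IsMoorePenroseInverse a b) (ha : IsSelfAdjoint a) :
    IsSelfAdjoint b := by
  have h_star := h.star
  rw [ha.star_eq] at h_star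
  exact h_star.unique h

protected theorem commute (h : IsMoorePenroseInverse a b) (ha : IsSelfAdjoint a) : Commute a b := by
  have h_star := h.isSelfAdjoint_mul.star_eq
  rw [star_mul, ha.star_eq, (h.isSelfAdjoint ha).star_eq] at h_star
  exact h_star.symm

end Semigroup

section CFC

variable {R : Type*} [TopologicalSpace R] [Ring R] [StarRing R] [Algebra ℝ R]
  [ContinuousFunctionalCalculus ℝ R IsSelfAdjoint]

theorem cfc_inv {a : R} (ha : IsSelfAdjoint a)
    (h_cont : ContinuousOn (fun x : ℝ ↦ x⁻¹) (spectrum ℝ a)) :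
    IsMoorePenroseInverse a (cfc (fun x : ℝ ↦ x⁻¹) a) := by
  have h_mul : a * cfc (fun x : ℝ ↦ x⁻¹) a = cfc (fun x : ℝ ↦ x * x⁻¹) a := by
    rw [cfc_mul (fun x : ℝ ↦ x) (fun x ↦ x⁻¹) a, cfc_id' ℝ a]
  have h_inv_mul : cfc (fun x : ℝ ↦ x⁻¹) a * a = cfc (fun x : ℝ ↦ x⁻¹ * x) a := by
    rw [cfc_mul (fun x : ℝ ↦ x⁻¹) (fun x ↦ x) a, cfc_id' ℝ a]
  have h_cont_mul : ContinuousOn (fun x : ℝ ↦ x * x⁻¹) (spectrum ℝ a) :=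
    continuousOn_id.mul h_cont
  have h_cont_inv_mul : ContinuousOn (fun x : ℝ ↦ x⁻¹ * x) (spectrum ℝ a) :=
    h_cont.mul continuousOn_id
  refine ⟨?_, ?_, h_mul ▸ cfc_predicate _ a, h_inv_mul ▸ cfc_predicate _ a⟩
  · -- `x * x⁻¹ * x = x` also holds at `x = 0`, by the convention `0⁻¹ = 0`.
    calc
      a * cfc (fun x : ℝ ↦ x⁻¹) a * a = cfc (fun x : ℝ ↦ x * x⁻¹ * x) a := by
        rw [h_mul, cfc_mul (fun x : ℝ ↦ x * x⁻¹) (fun x ↦ x) a h_cont_mul, cfc_id' ℝ a]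
      _ = a := by simp only [mul_inv_mul_cancel, cfc_id' ℝ a]
  · have h_pointwise (x : ℝ) : x⁻¹ * x * x⁻¹ = x⁻¹ := by
      simpa only [inv_inv] using mul_inv_mul_cancel x⁻¹
    rw [h_inv_mul, ← cfc_mul (fun x : ℝ ↦ x⁻¹ * x) (fun x ↦ x⁻¹) a h_cont_inv_mul]
    simp only [h_pointwise]

end CFC

section Matrix

open scoped ComplexOrder

variable {𝕜 m k : Type*} [RCLike 𝕜] [Fintype m] [Fintype k] {A B : Matrix m m 𝕜}

protected theorem posSemidef (h : IsMoorePenroseInverse A B) (hA : A.PosSemidef) :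
    B.PosSemidef := by
  have hB : Bᴴ = B := h.isSelfAdjoint hA.isHermitian
  have h_conj := hA.conjTranspose_mul_mul_same B
  rwa [hB, h.inv_mul_mul_inv] at h_conj

theorem mulVec_injective_mul (h : IsMoorePenroseInverse A B) (hA : A.IsHermitian)
    {J : Matrix m k 𝕜} (hJ : Function.Injective (A * J).mulVec) :
    Function.Injective (B * J).mulVec := by
  have h_comm : A * B = B * A := h.commute hA
  have h_factor : A * J = A * A * (B * J) := by
    rw [Matrix.mul_assoc, ← Matrix.mul_assoc A B, h_comm, ← Matrix.mul_assoc, ← Matrix.mul_assoc,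
      h.mul_mul_self]
  intro x y hxy
  apply hJ
  simpa only [h_factor, ← Matrix.mulVec_mulVec] using congrArg (A * A).mulVec hxy

end Matrix

end IsMoorePenroseInverse

section Matrix

variable {m k : Type*} [Fintype m] [Fintype k]

open scoped ComplexOrder in
theorem posDef_conjTranspose_mul_mul_of_injective {𝕜 : Type*} [RCLike 𝕜] {B : Matrix m m 𝕜}
    (hB : B.PosSemidef) {J : Matrix m k 𝕜} (hJ : Function.Injective (B * J).mulVec) :
    (Jᴴ * B * J).PosDef := by
  refine .of_dotProduct_mulVec_pos (hB.conjTranspose_mul_mul_same J).isHermitian fun x hx ↦ ?_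
  have h_form : star x ⬝ᵥ ((Jᴴ * B * J) *ᵥ x) = star (J *ᵥ x) ⬝ᵥ (B *ᵥ (J *ᵥ x)) := by
    simp only [star_mulVec, ← mulVec_mulVec, dotProduct_mulVec, vecMul_vecMul, Matrix.mul_assoc]
  refine h_form ▸ (hB.dotProduct_mulVec_nonneg _).lt_of_ne' fun h_zero ↦ hx (hJ ?_)
  rw [hB.dotProduct_mulVec_zero_iff, mulVec_mulVec] at h_zero
  simpa using h_zero

theorem isMoorePenroseInverse_mpinv [DecidableEq m] {A : Matrix m m ℝ} (hA : A.IsHermitian) :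
    IsMoorePenroseInverse A (mpinv A) := by
  have h_inv : IsMoorePenroseInverse A (cfc (fun x : ℝ ↦ x⁻¹) A) :=
    .cfc_inv hA (Matrix.finite_real_spectrum.continuousOn _)
  have h_exists : ∃ B : Matrix m m ℝ,
      A * B * A = A ∧ B * A * B = B ∧ (A * B)ᵀ = A * B ∧ (B * A)ᵀ = B * A :=
    ⟨_, h_inv.mul_mul_self, h_inv.inv_mul_mul_inv, h_inv.isSelfAdjoint_mul,
      h_inv.isSelfAdjoint_inv_mul⟩
  rw [mpinv, dif_pos h_exists]
  obtain ⟨h₁, h₂, h₃, h₄⟩ := h_exists.choose_spec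
  exact ⟨h₁, h₂, h₃, h₄⟩

theorem posDef_transpose_mul_mpinv_mul [DecidableEq m] {A : Matrix m m ℝ} (hA : A.PosSemidef)
    {J : Matrix m k ℝ} (hJ : Function.Injective (A * J).mulVec) :
    (Jᵀ * mpinv A * J).PosDef := by
  have h := isMoorePenroseInverse_mpinv hA.isHermitian
  exact posDef_conjTranspose_mul_mul_of_injective (h.posSemidef hA)
    (h.mulVec_injective_mul hA.isHermitian hJ)

theorem dotProduct_sum_smul_vecMulVec_mulVec {ι R : Type*} [CommSemiring R] (s : Finset ι)
    (c : ι → R) (v : ι → m → R) (w : m → R) :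
    w ⬝ᵥ ((∑ e ∈ s, c e • vecMulVec (v e) (v e)) *ᵥ w) = ∑ e ∈ s, c e * (v e ⬝ᵥ w) ^ 2 := by
  rw [sum_mulVec, dotProduct_sum]
  refine Finset.sum_congr rfl fun e _ ↦ ?_
  rw [smul_mulVec, vecMulVec_mulVec, op_smul_eq_smul, dotProduct_smul, dotProduct_smul,
    dotProduct_comm w, smul_eq_mul, smul_eq_mul, sq]

end Matrix

theorem mulVec_injective_of_rank_eq_card {m k K : Type*} [Fintype k] [Field K]
    {A : Matrix m k K} (hA : A.rank = Fintype.card k) : Function.Injective A.mulVec := by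
  rw [mulVec_injective_iff, linearIndependent_iff_card_eq_finrank_span, ← hA,
    A.rank_eq_finrank_span_cols, Set.finrank]

theorem eq_of_preconnected_of_forall_adj {V α : Type*} {G : SimpleGraph V} (hG : G.Preconnected)
    {f : V → α} (hf : ∀ u v, G.Adj u v → f u = f v) (u v : V) : f u = f v := by
  obtain ⟨walk⟩ := hG u v
  induction walk with
  | nil => rfl
  | cons h_adj _ ih => exact (hf _ _ h_adj).trans ih

section Laplacian

variable {n : ℕ} {ω : Fin n → Fin n → ℝ} {q : Fin n → ℝ}

theorem dvol_nonneg (hω : ∀ i j, 0 ≤ ω i j) (i : Fin n) : 0 ≤ dvol ω i :=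
  div_nonneg (Finset.sum_nonneg fun j _ ↦ hω i j)
    (Finset.sum_nonneg fun k _ ↦ Finset.sum_nonneg fun j _ ↦ hω k j)

theorem dvol_pos (hω : ∀ i j, 0 ≤ ω i j) {i j : Fin n} (hij : 0 < ω i j) : 0 < dvol ω i := by
  have h_row : 0 < ∑ j, ω i j := Finset.sum_pos' (fun j _ ↦ hω i j) ⟨j, Finset.mem_univ j, hij⟩
  exact div_pos h_row <| Finset.sum_pos' (fun k _ ↦ Finset.sum_nonneg fun j _ ↦ hω k j)
    ⟨i, Finset.mem_univ i, h_row⟩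

theorem lamW_nonneg (hω : ∀ i j, 0 ≤ ω i j) (hq : ∀ i, 0 ≤ q i) (i j : Fin n) :
    0 ≤ lamW ω q i j :=
  div_nonneg (add_nonneg (div_nonneg (hq i) (dvol_nonneg hω i))
    (div_nonneg (hq j) (dvol_nonneg hω j))) zero_le_two

theorem lamW_pos (hω : ∀ i j, 0 ≤ ω i j) {i j : Fin n} (hi : 0 < q i) (hj : 0 ≤ q j)
    (hij : 0 < ω i j) : 0 < lamW ω q i j :=
  div_pos (add_pos_of_pos_of_nonneg (div_pos hi (dvol_pos hω hij))
    (div_nonneg hj (dvol_nonneg hω j))) zero_lt_two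

/-- The pairs `(i, j)` with `j < i` over which the sum defining `Lap` runs. -/
def orientedPairs (n : ℕ) : Finset (Fin n × Fin n) :=
  {e | e.2 < e.1}

/-- The row of the unweighted incidence matrix belonging to the pair `e`. -/
def incidenceRow (e : Fin n × Fin n) : Fin n → ℝ :=
  Pi.single e.1 1 - Pi.single e.2 1

theorem incidenceRow_dotProduct (e : Fin n × Fin n) (w : Fin n → ℝ) :
    incidenceRow e ⬝ᵥ w = w e.1 - w e.2 := by
  simp [incidenceRow, sub_dotProduct]

theorem Lap_eq_sum_vecMulVec (ω : Fin n → Fin n → ℝ) (q : Fin n → ℝ) :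
    Lap ω q = ∑ e ∈ orientedPairs n,
      (ω e.1 e.2 * lamW ω q e.1 e.2) • vecMulVec (incidenceRow e) (incidenceRow e) := by
  ext k l
  simp [Lap, orientedPairs, incidenceRow, Finset.sum_filter, Fintype.sum_prod_type,
    Matrix.sum_apply, vecMulVec_apply, Pi.single_apply]

theorem posSemidef_Lap (hω : ∀ i j, 0 ≤ ω i j) (hq : ∀ i, 0 ≤ q i) : (Lap ω q).PosSemidef := by
  rw [Lap_eq_sum_vecMulVec]
  exact posSemidef_sum _ fun e _ ↦ (posSemidef_vecMulVec_self_star (incidenceRow e)).smul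
    (mul_nonneg (hω _ _) (lamW_nonneg hω hq _ _))

theorem dotProduct_Lap_mulVec (ω : Fin n → Fin n → ℝ) (q w : Fin n → ℝ) :
    w ⬝ᵥ (Lap ω q *ᵥ w) =
      ∑ e ∈ orientedPairs n, ω e.1 e.2 * lamW ω q e.1 e.2 * (w e.1 - w e.2) ^ 2 := by
  simp only [Lap_eq_sum_vecMulVec, dotProduct_sum_smul_vecMulVec_mulVec, incidenceRow_dotProduct]

theorem eq_of_Lap_mulVec_eq_zero_of_lt (hω : ∀ i j, 0 ≤ ω i j) (hq : ∀ i, 0 < q i)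
    {w : Fin n → ℝ} (hw : Lap ω q *ᵥ w = 0) {i j : Fin n} (hji : j < i) (hij : 0 < ω i j) :
    w i = w j := by
  have h_form := dotProduct_Lap_mulVec ω q w
  rw [hw, dotProduct_zero, eq_comm, Finset.sum_eq_zero_iff_of_nonneg fun e _ ↦ mul_nonneg
    (mul_nonneg (hω _ _) (lamW_nonneg hω (fun i ↦ (hq i).le) _ _)) (sq_nonneg _)] at h_form
  have h_term := h_form (i, j) (by simpa [orientedPairs] using hji)
  have h_weight := mul_pos hij (lamW_pos hω (hq i) (hq j).le hij)
  exact sub_eq_zero.1 <| pow_eq_zero_iff two_ne_zero |>.1 <|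
    (mul_eq_zero.1 h_term).resolve_left h_weight.ne'

theorem eq_of_Lap_mulVec_eq_zero (hω : isWeight ω) (hconn : isConn ω) (hq : ∀ i, 0 < q i)
    {w : Fin n → ℝ} (hw : Lap ω q *ᵥ w = 0) (i j : Fin n) : w i = w j := by
  obtain ⟨h_symm, h_nonneg, -⟩ := hω
  have h_edge (i j : Fin n) (hij : 0 < ω i j) : w i = w j := by
    rcases lt_trichotomy i j with h_lt | rfl | h_gt
    · exact (eq_of_Lap_mulVec_eq_zero_of_lt h_nonneg hq hw h_lt (h_symm i j ▸ hij)).symm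
    · rfl
    · exact eq_of_Lap_mulVec_eq_zero_of_lt h_nonneg hq hw h_gt hij
  refine eq_of_preconnected_of_forall_adj hconn.preconnected (fun u v h_adj ↦ ?_) i j
  exact h_adj.2.elim (h_edge u v) fun h ↦ (h_edge v u h).symm

theorem eq_zero_of_Lap_mulVec_eq_zero_of_sum_eq_zero (hω : isWeight ω) (hconn : isConn ω)
    (hq : ∀ i, 0 < q i) {w : Fin n → ℝ} (hw : Lap ω q *ᵥ w = 0) (h_sum : ∑ i, w i = 0) :
    w = 0 := by
  funext i
  have h_card : (n : ℝ) * w i = 0 := by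
    simpa [eq_of_Lap_mulVec_eq_zero hω hconn hq hw _ i] using h_sum
  exact (mul_eq_zero.1 h_card).resolve_left (Nat.cast_ne_zero.2 i.pos.ne')

theorem mulVec_injective_Lap_mul {k : Type*} [Fintype k] (hω : isWeight ω) (hconn : isConn ω)
    (hq : ∀ i, 0 < q i) {J : Matrix (Fin n) k ℝ} (hJ : Function.Injective J.mulVec)
    (h_ones : 1 ᵥ* J = 0) : Function.Injective (Lap ω q * J).mulVec := by
  refine (injective_iff_map_eq_zero (Lap ω q * J).mulVecLin).2 fun x hx ↦ ?_
  have h_ker : Lap ω q *ᵥ (J *ᵥ x) = 0 := by simpa using hx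
  have h_sum : ∑ i, (J *ᵥ x) i = 0 := by
    rw [← one_dotProduct, dotProduct_mulVec, h_ones, zero_dotProduct]
  apply hJ
  rw [eq_zero_of_Lap_mulVec_eq_zero_of_sum_eq_zero hω hconn hq h_ker h_sum, mulVec_zero]

end Laplacian

section WassersteinMetric

open scoped Topology

variable {n d : ℕ} {p : (Fin d → ℝ) → Fin n → ℝ} {θ : Fin d → ℝ}

theorem one_vecMul_Jac (hp : DifferentiableAt ℝ p θ) {c : ℝ}
    (h_sum : ∀ᶠ x in 𝓝 θ, ∑ i, p x i = c) :
    1 ᵥ* Jac p θ = 0 := by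
  have h_fderiv : ∑ i, fderiv ℝ (fun x ↦ p x i) θ = 0 := by
    rw [← fderiv_fun_sum fun i _ ↦ differentiableAt_pi.1 hp i, Filter.EventuallyEq.fderiv_eq h_sum,
      fderiv_fun_const, Pi.zero_apply]
  funext a
  simpa [vecMul, dotProduct, Jac, pd] using DFunLike.congr_fun h_fderiv (Pi.single a 1)

theorem GW_symm_posdef_general {ω : Fin n → Fin n → ℝ} (hω : isWeight ω) (hconn : isConn ω)
    (hp : DifferentiableAt ℝ p θ) (hpos : ∀ᶠ x in 𝓝 θ, posProb (p x))
    (hrank : (Jac p θ).rank = d) : (GW ω p θ).IsSymm ∧ (GW ω p θ).PosDef := by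
  have hq : ∀ i, 0 < p θ i := hpos.self_of_nhds.1
  have h_Jac : Function.Injective (Jac p θ).mulVec := mulVec_injective_of_rank_eq_card (by simpa)
  have h_ones : 1 ᵥ* Jac p θ = 0 := one_vecMul_Jac hp (hpos.mono fun _ hx ↦ hx.2)
  have h_Lap : (Lap ω (p θ)).PosSemidef := posSemidef_Lap hω.2.1 fun i ↦ (hq i).le
  have h_posDef : (GW ω p θ).PosDef :=
    posDef_transpose_mul_mpinv_mul h_Lap (mulVec_injective_Lap_mul hω hconn hq h_Jac h_ones)
  exact ⟨h_posDef.isHermitian, h_posDef⟩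

end WassersteinMetric

/-- For a connected weighted graph, `d ≤ n − 1`, and a continuously
differentiable parametrization `p : Θ → P₊(I)` whose Jacobian has full rank `d` at `θ`,
the Wasserstein metric tensor `G_W(θ) = J_θp(θ)ᵀ L(p(θ))† J_θp(θ)` is a symmetric
positive definite `d×d` matrix. -/
theorem GW_symm_posdef {n d : ℕ} (ω : Fin n → Fin n → ℝ)
    (hω : isWeight ω) (hconn : isConn ω) (hd : d + 1 ≤ n)
    (p : (Fin d → ℝ) → Fin n → ℝ) (hp : ContDiff ℝ 1 p)
    (hpos : ∀ θ, posProb (p θ))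
    (θ : Fin d → ℝ) (hrank : (Jac p θ).rank = d) :
    (GW ω p θ).IsSymm ∧ (GW ω p θ).PosDef := by
  exact GW_symm_posdef_general hω hconn (hp.differentiable one_ne_zero θ) (.of_forall hpos) hrank

end
end StatRicci
end
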